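/- arXiv:1403.4967 — 3 statements merged into one kernel-verified Lean document; each statement's English description precedes it below -/
import Mathlib

section
/- Let (S, ℒ) be a partial linear space and let p, L₁, L₂, M₁, M₂ form an incomplete Veblen configuration in V_k(S, ℒ). Assume moreover that for one of the pairs of intersection points ((L₁ ∩ M₁, L₂ ∩ M₂) or (L₁ ∩ M₂, L₂ ∩ M₁)) there are points a in the first intersection and b in the second intersection that are adjacent in V_k(S, ℒ). Then the four blocks L₁, L₂, M₁, M₂ are all contained in one leaf of V_k(S, ℒ); consequently, if (S, ℒ) is veblenian, then M₁ ∩ M₂ ≠ ∅. -/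
def veroBlock {S : Type*} (e : Multiset S) (r : ℕ) (B : Set S) : Set (Multiset S) :=
  { m | ∃ x ∈ B, m = e + Multiset.replicate r x }

def veroBlocks {S : Type*} (k : ℕ) (L : Set (Set S)) : Set (Set (Multiset S)) :=
  { Bl | ∃ (r : ℕ) (e : Multiset S) (B : Set S),
      0 < r ∧ r ≤ k ∧ Multiset.card e = k - r ∧ B ∈ L ∧ Bl = veroBlock e r B }

def veroPoints (S : Type*) (k : ℕ) : Set (Multiset S) :=
  { m | Multiset.card m = k }

def veroLeaves (S : Type*) (k : ℕ) : Set (Set (Multiset S)) :=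
  { T | ∃ (r : ℕ) (e : Multiset S),
      0 < r ∧ r ≤ k ∧ Multiset.card e = k - r ∧ T = veroBlock e r Set.univ }

def VerAdj {S : Type*} (k : ℕ) (L : Set (Set S)) (f g : Multiset S) : Prop :=
  ∃ Bl ∈ veroBlocks k L, f ∈ Bl ∧ g ∈ Bl

def AtLeastThree {α : Type*} (B : Set α) : Prop :=
  ∃ a b c, a ∈ B ∧ b ∈ B ∧ c ∈ B ∧ a ≠ b ∧ a ≠ c ∧ b ≠ c

def IsPLS {α : Type*} (L : Set (Set α)) : Prop :=
  L.Nonempty ∧ (∀ B ∈ L, AtLeastThree B) ∧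
    ∀ p q : α, p ≠ q → ∀ B₁ ∈ L, ∀ B₂ ∈ L,
      p ∈ B₁ → q ∈ B₁ → p ∈ B₂ → q ∈ B₂ → B₁ = B₂

def IsLinearSpace {α : Type*} (L : Set (Set α)) : Prop :=
  IsPLS L ∧ ∀ p q : α, p ≠ q → ∃ B ∈ L, p ∈ B ∧ q ∈ B

def IsSubspace {α : Type*} (Blk : Set (Set α)) (X : Set α) : Prop :=
  ∀ B ∈ Blk, (∃ p ∈ B ∩ X, ∃ q ∈ B ∩ X, p ≠ q) → B ⊆ X

def IsHyperplane {α : Type*} (L : Set (Set α)) (X : Set α) : Prop :=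
  IsSubspace L X ∧ (∀ B ∈ L, (B ∩ X).Nonempty) ∧ X ≠ Set.univ

def Veblenian {α : Type*} (L : Set (Set α)) : Prop :=
  ∀ (p : α) (L₁ L₂ M₁ M₂ : Set α), L₁ ∈ L → L₂ ∈ L → M₁ ∈ L → M₂ ∈ L →
    L₁ ≠ L₂ → L₁ ≠ M₁ → L₁ ≠ M₂ → L₂ ≠ M₁ → L₂ ≠ M₂ → M₁ ≠ M₂ →
    p ∈ L₁ → p ∈ L₂ → p ∉ M₁ → p ∉ M₂ →
    (L₁ ∩ M₁).Nonempty → (L₁ ∩ M₂).Nonempty →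
    (L₂ ∩ M₁).Nonempty → (L₂ ∩ M₂).Nonempty →
    (M₁ ∩ M₂).Nonempty

def IsVeroHyperplane {S : Type*} (k : ℕ) (L : Set (Set S)) (X : Set (Multiset S)) : Prop :=
  X ⊆ veroPoints S k ∧ X ≠ veroPoints S k ∧
    IsSubspace (veroBlocks k L) X ∧ ∀ B ∈ veroBlocks k L, (B ∩ X).Nonempty

def addPt {S : Type*} (a : S) (m : Set S) : Set (Multiset S) :=
  { t | ∃ x ∈ m, t = ({a, x} : Multiset S) }

def dbl {S : Type*} (m : Set S) : Set (Multiset S) :=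
  { t | ∃ x ∈ m, t = ({x, x} : Multiset S) }

/-!
Within a leaf the Veronese space is a copy of `(S, ℒ)`, and two leaves share at most one point.
The crux is that a point `a` adjacent to three distinct points `e + r·x`, `e + r·y`, `e + r·z` of
a leaf belongs to that leaf. Two adjacent points differ by replacing `s` copies of one element by
another, so the multiplicities of `a` and `e + r·x` differ in at most two places, by opposite
amounts, and likewise for `y` and `z`. If one of `x`, `y`, `z` has the same multiplicity in `a` as
in `e`, this forces `a = e + r·t` for some `t`. Otherwise the excesses of `a` over `e` at `x`, `y`
and `z` are nonzero and pairwise opposite, which is impossible.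

In an incomplete Veblen configuration in which `a ∈ L₁ ∩ M₁` and `b ∈ L₂ ∩ M₂` are adjacent, `a` is
adjacent to every vertex on `L₂`, and `b` to every vertex on `L₁`. At least one of the two lines
carries three distinct vertices, and the whole configuration lies in the leaf of that line.
-/

open Multiset (replicate)

section VeblenConfig

variable {α : Type*} {𝓑 : Set (Set α)} {p a b c d : α} {L₁ L₂ M₁ M₂ : Set α}

/-- An incomplete Veblen configuration in the block structure `𝓑`, with chosen points of
intersection. Instead of distinctness of `L₁, L₂` and of `M₁, M₂` it is required that these pairs
meet in at most one point, so that the notion makes sense when `𝓑` is not a partial linear space. -/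
structure VeblenConfig (𝓑 : Set (Set α)) (p a b c d : α) (L₁ L₂ M₁ M₂ : Set α) : Prop where
  L₁_mem : L₁ ∈ 𝓑
  L₂_mem : L₂ ∈ 𝓑
  M₁_mem : M₁ ∈ 𝓑
  M₂_mem : M₂ ∈ 𝓑
  L_inter_subsingleton : (L₁ ∩ L₂).Subsingleton
  M_inter_subsingleton : (M₁ ∩ M₂).Subsingleton
  p_mem : p ∈ L₁ ∩ L₂
  p_notMem_M₁ : p ∉ M₁
  p_notMem_M₂ : p ∉ M₂
  a_mem : a ∈ L₁ ∩ M₁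
  b_mem : b ∈ L₂ ∩ M₂
  c_mem : c ∈ L₁ ∩ M₂
  d_mem : d ∈ L₂ ∩ M₁

namespace VeblenConfig

theorem swap_L (h : VeblenConfig 𝓑 p a b c d L₁ L₂ M₁ M₂) :
    VeblenConfig 𝓑 p b a d c L₂ L₁ M₂ M₁ where
  L₁_mem := h.L₂_mem
  L₂_mem := h.L₁_mem
  M₁_mem := h.M₂_mem
  M₂_mem := h.M₁_mem
  L_inter_subsingleton := Set.inter_comm L₁ L₂ ▸ h.L_inter_subsingleton
  M_inter_subsingleton := Set.inter_comm M₁ M₂ ▸ h.M_inter_subsingleton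
  p_mem := h.p_mem.symm
  p_notMem_M₁ := h.p_notMem_M₂
  p_notMem_M₂ := h.p_notMem_M₁
  a_mem := h.b_mem
  b_mem := h.a_mem
  c_mem := h.d_mem
  d_mem := h.c_mem

theorem swap_M (h : VeblenConfig 𝓑 p a b c d L₁ L₂ M₁ M₂) :
    VeblenConfig 𝓑 p c d a b L₁ L₂ M₂ M₁ where
  L₁_mem := h.L₁_mem
  L₂_mem := h.L₂_mem
  M₁_mem := h.M₂_mem
  M₂_mem := h.M₁_mem
  L_inter_subsingleton := h.L_inter_subsingleton
  M_inter_subsingleton := Set.inter_comm M₁ M₂ ▸ h.M_inter_subsingleton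
  p_mem := h.p_mem
  p_notMem_M₁ := h.p_notMem_M₂
  p_notMem_M₂ := h.p_notMem_M₁
  a_mem := h.c_mem
  b_mem := h.d_mem
  c_mem := h.a_mem
  d_mem := h.b_mem

theorem p_ne_a (h : VeblenConfig 𝓑 p a b c d L₁ L₂ M₁ M₂) : p ≠ a :=
  (ne_of_mem_of_not_mem h.a_mem.2 h.p_notMem_M₁).symm

theorem p_ne_d (h : VeblenConfig 𝓑 p a b c d L₁ L₂ M₁ M₂) : p ≠ d :=
  (ne_of_mem_of_not_mem h.d_mem.2 h.p_notMem_M₁).symm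

theorem notMem_L₂_of_mem_L₁ (h : VeblenConfig 𝓑 p a b c d L₁ L₂ M₁ M₂) {q : α} (hq : q ∈ L₁)
    (hpq : p ≠ q) : q ∉ L₂ :=
  fun hq₂ ↦ hpq (h.L_inter_subsingleton h.p_mem ⟨hq, hq₂⟩)

theorem a_ne_d (h : VeblenConfig 𝓑 p a b c d L₁ L₂ M₁ M₂) : a ≠ d :=
  (ne_of_mem_of_not_mem h.d_mem.1 (h.notMem_L₂_of_mem_L₁ h.a_mem.1 h.p_ne_a)).symm

theorem a_ne_b (h : VeblenConfig 𝓑 p a b c d L₁ L₂ M₁ M₂) : a ≠ b :=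
  (ne_of_mem_of_not_mem h.b_mem.1 (h.notMem_L₂_of_mem_L₁ h.a_mem.1 h.p_ne_a)).symm

theorem a_ne_c_or_b_ne_d (h : VeblenConfig 𝓑 p a b c d L₁ L₂ M₁ M₂) : a ≠ c ∨ b ≠ d := by
  by_contra! ⟨hac, hbd⟩
  exact h.a_ne_b (h.M_inter_subsingleton ⟨h.a_mem.2, hac ▸ h.c_mem.2⟩ ⟨hbd ▸ h.d_mem.2, h.b_mem.2⟩)

theorem M_inter_nonempty (h : VeblenConfig 𝓑 p a b c d L₁ L₂ M₁ M₂) (h𝓑 : Veblenian 𝓑) :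
    (M₁ ∩ M₂).Nonempty := by
  have hL : L₁ ≠ L₂ := by
    rintro rfl
    exact h.notMem_L₂_of_mem_L₁ h.a_mem.1 h.p_ne_a h.a_mem.1
  have hM : M₁ ≠ M₂ := by
    rintro rfl
    exact h.a_ne_d (h.M_inter_subsingleton ⟨h.a_mem.2, h.a_mem.2⟩ ⟨h.d_mem.2, h.d_mem.2⟩)
  exact h𝓑 p L₁ L₂ M₁ M₂ h.L₁_mem h.L₂_mem h.M₁_mem h.M₂_mem hL
    (ne_of_mem_of_not_mem' h.p_mem.1 h.p_notMem_M₁) (ne_of_mem_of_not_mem' h.p_mem.1 h.p_notMem_M₂)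
    (ne_of_mem_of_not_mem' h.p_mem.2 h.p_notMem_M₁) (ne_of_mem_of_not_mem' h.p_mem.2 h.p_notMem_M₂)
    hM h.p_mem.1 h.p_mem.2 h.p_notMem_M₁ h.p_notMem_M₂ ⟨a, h.a_mem⟩ ⟨c, h.c_mem⟩ ⟨d, h.d_mem⟩
    ⟨b, h.b_mem⟩

end VeblenConfig

theorem Veblenian.image {β : Type*} (h𝓑 : Veblenian 𝓑) {f : α → β} (hf : f.Injective) :
    Veblenian (Set.image f '' 𝓑) := by
  rintro _ _ _ _ _ ⟨A₁, hA₁, rfl⟩ ⟨A₂, hA₂, rfl⟩ ⟨B₁, hB₁, rfl⟩ ⟨B₂, hB₂, rfl⟩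
    hA hA₁B₁ hA₁B₂ hA₂B₁ hA₂B₂ hB ⟨x, hxA₁, rfl⟩ hxA₂ hxB₁ hxB₂
  simp only [hf.mem_set_image, hf.image_injective.ne_iff, ← Set.image_inter hf,
    Set.image_nonempty] at *
  exact h𝓑 x A₁ A₂ B₁ B₂ hA₁ hA₂ hB₁ hB₂ hA hA₁B₁ hA₁B₂ hA₂B₁ hA₂B₂ hB hxA₁ hxA₂ hxB₁ hxB₂

end VeblenConfig

section Veronese

variable {S : Type*} {ℒ : Set (Set S)} {k r r' : ℕ} {a b e e' f g : Multiset S}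
  {x y z x' y' : S} {A B : Set S} {M N : Set (Multiset S)}

theorem add_replicate_inter_add_replicate [DecidableEq S] (e : Multiset S) (r : ℕ) (hxy : x ≠ y) :
    (e + replicate r x) ∩ (e + replicate r y) = e := by
  ext i
  simp only [Multiset.count_inter, Multiset.count_add, Multiset.count_replicate]
  grind

theorem add_replicate_injective (e : Multiset S) (hr : r ≠ 0) :
    Function.Injective fun x ↦ e + replicate r x :=
  (add_right_injective e).comp (Multiset.replicate_right_injective hr)

theorem add_replicate_pair_inj (hr : r ≠ 0) (hxy : x ≠ y)
    (hx : e + replicate r x = e' + replicate r' x')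
    (hy : e + replicate r y = e' + replicate r' y') : e = e' ∧ r = r' := by
  classical
  have hxy' : x' ≠ y' := by
    rintro rfl
    exact hxy (add_replicate_injective e hr (hx.trans hy.symm))
  obtain rfl : e = e' := by
    rw [← add_replicate_inter_add_replicate e r hxy, hx, hy,
      add_replicate_inter_add_replicate e' r' hxy']
  exact ⟨rfl, by simpa using congrArg Multiset.card hx⟩

theorem veroBlock_eq_image (e : Multiset S) (r : ℕ) :
    veroBlock e r = Set.image fun x ↦ e + replicate r x := by
  ext B m
  simp only [veroBlock, Set.mem_ofPred_eq, Set.mem_image, eq_comm]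

theorem add_replicate_mem_veroBlock (hr : r ≠ 0) :
    e + replicate r x ∈ veroBlock e r B ↔ x ∈ B := by
  rw [veroBlock_eq_image]
  exact (add_replicate_injective e hr).mem_set_image

theorem veroBlock_mono (hAB : A ⊆ B) : veroBlock e r A ⊆ veroBlock e r B :=
  fun _ ⟨x, hx, hm⟩ ↦ ⟨x, hAB hx, hm⟩

theorem subset_leaf_of_mem_image_veroBlock (hM : M ∈ veroBlock e r '' ℒ) :
    M ⊆ veroBlock e r Set.univ := by
  obtain ⟨B, -, rfl⟩ := hM
  exact veroBlock_mono (Set.subset_univ B)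

theorem Veblenian.image_veroBlock (hℒ : Veblenian ℒ) (hr : r ≠ 0) :
    Veblenian (veroBlock e r '' ℒ) := by
  rw [veroBlock_eq_image]
  exact hℒ.image (add_replicate_injective e hr)

theorem exists_leaf_of_mem_veroBlocks (hM : M ∈ veroBlocks k ℒ) :
    ∃ r e, r ≠ 0 ∧ veroBlock e r Set.univ ∈ veroLeaves S k ∧ M ∈ veroBlock e r '' ℒ := by
  obtain ⟨r, e, B, hr, hrk, he, hB, rfl⟩ := hM
  exact ⟨r, e, hr.ne', ⟨r, e, hr, hrk, he, rfl⟩, B, hB, rfl⟩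

theorem mem_image_veroBlock_of_two_points (hM : M ∈ veroBlocks k ℒ) (hr : r ≠ 0) (hfg : f ≠ g)
    (hf : f ∈ veroBlock e r Set.univ) (hg : g ∈ veroBlock e r Set.univ) (hfM : f ∈ M)
    (hgM : g ∈ M) : M ∈ veroBlock e r '' ℒ := by
  obtain ⟨r', e', B, -, -, -, hB, rfl⟩ := hM
  obtain ⟨x, -, rfl⟩ := hf
  obtain ⟨y, -, rfl⟩ := hg
  obtain ⟨x', -, hx⟩ := hfM
  obtain ⟨y', -, hy⟩ := hgM
  obtain ⟨rfl, rfl⟩ := add_replicate_pair_inj hr (ne_of_apply_ne (e + replicate r ·) hfg) hx hy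
  exact ⟨B, hB, rfl⟩

theorem IsPLS.veroBlocks_inter_subsingleton (hℒ : IsPLS ℒ) (hM : M ∈ veroBlocks k ℒ)
    (hN : N ∈ veroBlocks k ℒ) (hMN : M ≠ N) : (M ∩ N).Subsingleton := by
  rintro f ⟨hfM, hfN⟩ g ⟨hgM, hgN⟩
  by_contra hfg
  obtain ⟨r, e, hr, -, hMleaf⟩ := exists_leaf_of_mem_veroBlocks hM
  have hsub := subset_leaf_of_mem_image_veroBlock hMleaf
  obtain ⟨A, hA, rfl⟩ := hMleaf
  obtain ⟨B, hB, rfl⟩ :=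
    mem_image_veroBlock_of_two_points hN hr hfg (hsub hfM) (hsub hgM) hfN hgN
  obtain ⟨x, hxA, rfl⟩ := hfM
  obtain ⟨y, hyA, rfl⟩ := hgM
  rw [add_replicate_mem_veroBlock hr] at hfN hgN
  have hxy : x ≠ y := ne_of_apply_ne (e + replicate r ·) hfg
  exact hMN (congrArg _ (hℒ.2.2 x y hxy A hA B hB hxA hyA hfN hgN))

namespace VerAdj

theorem of_mem (hM : M ∈ veroBlocks k ℒ) (hf : f ∈ M) (hg : g ∈ M) : VerAdj k ℒ f g :=
  ⟨M, hM, hf, hg⟩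

theorem symm (h : VerAdj k ℒ f g) : VerAdj k ℒ g f :=
  let ⟨M, hM, hf, hg⟩ := h
  ⟨M, hM, hg, hf⟩

theorem exists_eq_add_replicate (h : VerAdj k ℒ f g) :
    ∃ m s u v, f = m + replicate s u ∧ g = m + replicate s v := by
  obtain ⟨_, ⟨s, m, B, -, -, -, -, rfl⟩, ⟨u, -, hu⟩, ⟨v, -, hv⟩⟩ := h
  exact ⟨m, s, u, v, hu, hv⟩

theorem mem_leaf_of_count_eq [DecidableEq S] (h : VerAdj k ℒ a (e + replicate r x)) (hr : r ≠ 0)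
    (hx : a.count x = e.count x) : a ∈ veroBlock e r Set.univ := by
  obtain ⟨m, s, u, v, rfl, hm⟩ := h.exists_eq_add_replicate
  have hcount := congrArg (Multiset.count x) hm
  simp only [Multiset.count_add, Multiset.count_replicate, if_true] at hcount hx
  obtain ⟨rfl, rfl⟩ : v = x ∧ s = r := by grind
  obtain rfl : e = m := add_right_cancel hm
  exact ⟨u, Set.mem_univ u, rfl⟩

theorem count_add_count_eq [DecidableEq S] (h : VerAdj k ℒ a (e + replicate r x)) (hxy : x ≠ y)
    (hxz : x ≠ z) (hyz : y ≠ z) (hy : a.count y ≠ e.count y) (hz : a.count z ≠ e.count z) :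
    a.count y + a.count z = e.count y + e.count z := by
  obtain ⟨m, s, u, v, rfl, hm⟩ := h.exists_eq_add_replicate
  have hcount_y := congrArg (Multiset.count y) hm
  have hcount_z := congrArg (Multiset.count z) hm
  simp only [Multiset.count_add, Multiset.count_replicate, if_neg hxy, if_neg hxz]
    at hcount_y hcount_z hy hz ⊢
  have huv : (u = y ∧ v = z) ∨ (u = z ∧ v = y) := by grind
  grind

end VerAdj

theorem mem_leaf_of_verAdj_three (hr : r ≠ 0) (hxy : x ≠ y) (hxz : x ≠ z) (hyz : y ≠ z)
    (hx : VerAdj k ℒ a (e + replicate r x)) (hy : VerAdj k ℒ a (e + replicate r y))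
    (hz : VerAdj k ℒ a (e + replicate r z)) : a ∈ veroBlock e r Set.univ := by
  classical
  by_contra ha
  have hcx : a.count x ≠ e.count x := fun h ↦ ha (hx.mem_leaf_of_count_eq hr h)
  have hcy : a.count y ≠ e.count y := fun h ↦ ha (hy.mem_leaf_of_count_eq hr h)
  have hcz : a.count z ≠ e.count z := fun h ↦ ha (hz.mem_leaf_of_count_eq hr h)
  have hsum_yz := hx.count_add_count_eq hxy hxz hyz hcy hcz
  have hsum_xz := hy.count_add_count_eq hxy.symm hyz hxz hcx hcz
  have hsum_xy := hz.count_add_count_eq hxz.symm hyz.symm hxy hcx hcy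
  omega

namespace VeblenConfig

variable {p c d : Multiset S} {L₁ L₂ M₁ M₂ : Set (Multiset S)}

theorem exists_leaf_of_b_ne_d (h : VeblenConfig (veroBlocks k ℒ) p a b c d L₁ L₂ M₁ M₂)
    (hab : VerAdj k ℒ a b) (hbd : b ≠ d) :
    ∃ r e, r ≠ 0 ∧ veroBlock e r Set.univ ∈ veroLeaves S k ∧
      VeblenConfig (veroBlock e r '' ℒ) p a b c d L₁ L₂ M₁ M₂ := by
  obtain ⟨r, e, hr, hleaf, hL₂⟩ := exists_leaf_of_mem_veroBlocks h.L₂_mem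
  have hsub₂ := subset_leaf_of_mem_image_veroBlock hL₂
  have ha : a ∈ veroBlock e r Set.univ := by
    have hap := VerAdj.of_mem h.L₁_mem h.a_mem.1 h.p_mem.1
    have had := VerAdj.of_mem h.M₁_mem h.a_mem.2 h.d_mem.2
    have hpb := h.swap_L.p_ne_a
    have hpd := h.p_ne_d
    obtain ⟨x, -, rfl⟩ := hsub₂ h.p_mem.2
    obtain ⟨y, -, rfl⟩ := hsub₂ h.b_mem.1
    obtain ⟨z, -, rfl⟩ := hsub₂ h.d_mem.1
    exact mem_leaf_of_verAdj_three hr (ne_of_apply_ne (e + replicate r ·) hpb)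
      (ne_of_apply_ne (e + replicate r ·) hpd) (ne_of_apply_ne (e + replicate r ·) hbd) hap hab had
  have hL₁ : L₁ ∈ veroBlock e r '' ℒ := mem_image_veroBlock_of_two_points h.L₁_mem hr h.p_ne_a
    (hsub₂ h.p_mem.2) ha h.p_mem.1 h.a_mem.1
  have hc : c ∈ veroBlock e r Set.univ := subset_leaf_of_mem_image_veroBlock hL₁ h.c_mem.1
  exact ⟨r, e, hr, hleaf,
    { h with
      L₁_mem := hL₁
      L₂_mem := hL₂
      M₁_mem := mem_image_veroBlock_of_two_points h.M₁_mem hr h.a_ne_d ha (hsub₂ h.d_mem.1)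
        h.a_mem.2 h.d_mem.2
      M₂_mem := mem_image_veroBlock_of_two_points h.M₂_mem hr h.swap_L.a_ne_d
        (hsub₂ h.b_mem.1) hc h.b_mem.2 h.c_mem.2 }⟩

theorem exists_leaf_of_verAdj (h : VeblenConfig (veroBlocks k ℒ) p a b c d L₁ L₂ M₁ M₂)
    (hab : VerAdj k ℒ a b) :
    ∃ r e, r ≠ 0 ∧ veroBlock e r Set.univ ∈ veroLeaves S k ∧
      VeblenConfig (veroBlock e r '' ℒ) p a b c d L₁ L₂ M₁ M₂ := by
  rcases h.a_ne_c_or_b_ne_d with hac | hbd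
  · obtain ⟨r, e, hr, hleaf, h'⟩ := h.swap_L.exists_leaf_of_b_ne_d hab.symm hac
    exact ⟨r, e, hr, hleaf, h'.swap_L⟩
  · exact h.exists_leaf_of_b_ne_d hab hbd

theorem common_leaf_and_M_inter_nonempty (h : VeblenConfig (veroBlocks k ℒ) p a b c d L₁ L₂ M₁ M₂)
    (hadj : VerAdj k ℒ a b ∨ VerAdj k ℒ c d) :
    (∃ T ∈ veroLeaves S k, L₁ ⊆ T ∧ L₂ ⊆ T ∧ M₁ ⊆ T ∧ M₂ ⊆ T) ∧
      (Veblenian ℒ → (M₁ ∩ M₂).Nonempty) := by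
  obtain ⟨r, e, hr, hleaf, h'⟩ : ∃ r e, r ≠ 0 ∧ veroBlock e r Set.univ ∈ veroLeaves S k ∧
      VeblenConfig (veroBlock e r '' ℒ) p a b c d L₁ L₂ M₁ M₂ := by
    rcases hadj with hab | hcd
    · exact h.exists_leaf_of_verAdj hab
    · obtain ⟨r, e, hr, hleaf, h'⟩ := h.swap_M.exists_leaf_of_verAdj hcd
      exact ⟨r, e, hr, hleaf, h'.swap_M⟩
  exact ⟨⟨_, hleaf, subset_leaf_of_mem_image_veroBlock h'.L₁_mem,
    subset_leaf_of_mem_image_veroBlock h'.L₂_mem, subset_leaf_of_mem_image_veroBlock h'.M₁_mem,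
    subset_leaf_of_mem_image_veroBlock h'.M₂_mem⟩,
    fun hℒ ↦ h'.M_inter_nonempty (hℒ.image_veroBlock hr)⟩

end VeblenConfig

end Veronese

theorem stmt_4_general {S : Type*} (ℒ : Set (Set S)) (k : ℕ)
    (p : Multiset S) (L₁ L₂ M₁ M₂ : Set (Multiset S))
    (hL₁ : L₁ ∈ veroBlocks k ℒ) (hL₂ : L₂ ∈ veroBlocks k ℒ)
    (hM₁ : M₁ ∈ veroBlocks k ℒ) (hM₂ : M₂ ∈ veroBlocks k ℒ)
    (hL_inter : (L₁ ∩ L₂).Subsingleton) (hM_inter : (M₁ ∩ M₂).Subsingleton)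
    (hp₁ : p ∈ L₁) (hp₂ : p ∈ L₂) (hp₃ : p ∉ M₁) (hp₄ : p ∉ M₂)
    (hi₁ : (L₁ ∩ M₁).Nonempty) (hi₂ : (L₁ ∩ M₂).Nonempty)
    (hi₃ : (L₂ ∩ M₁).Nonempty) (hi₄ : (L₂ ∩ M₂).Nonempty)
    (hadj : (∃ a ∈ L₁ ∩ M₁, ∃ b ∈ L₂ ∩ M₂, VerAdj k ℒ a b) ∨
            (∃ a ∈ L₁ ∩ M₂, ∃ b ∈ L₂ ∩ M₁, VerAdj k ℒ a b)) :
    (∃ T ∈ veroLeaves S k, L₁ ⊆ T ∧ L₂ ⊆ T ∧ M₁ ⊆ T ∧ M₂ ⊆ T) ∧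
      (Veblenian ℒ → (M₁ ∩ M₂).Nonempty) := by
  have veblenConfig {a b c d} : a ∈ L₁ ∩ M₁ → b ∈ L₂ ∩ M₂ → c ∈ L₁ ∩ M₂ → d ∈ L₂ ∩ M₁ →
      VeblenConfig (veroBlocks k ℒ) p a b c d L₁ L₂ M₁ M₂ :=
    .mk hL₁ hL₂ hM₁ hM₂ hL_inter hM_inter ⟨hp₁, hp₂⟩ hp₃ hp₄
  rcases hadj with ⟨a, ha, b, hb, hab⟩ | ⟨c, hc, d, hd, hcd⟩
  · obtain ⟨c, hc⟩ := hi₂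
    obtain ⟨d, hd⟩ := hi₃
    exact (veblenConfig ha hb hc hd).common_leaf_and_M_inter_nonempty (.inl hab)
  · obtain ⟨a, ha⟩ := hi₁
    obtain ⟨b, hb⟩ := hi₄
    exact (veblenConfig ha hb hc hd).common_leaf_and_M_inter_nonempty (.inr hcd)

theorem stmt_4 {S : Type*} (ℒ : Set (Set S)) (hL : IsPLS ℒ) (k : ℕ)
    (p : Multiset S) (L₁ L₂ M₁ M₂ : Set (Multiset S))
    (hL₁ : L₁ ∈ veroBlocks k ℒ) (hL₂ : L₂ ∈ veroBlocks k ℒ)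
    (hM₁ : M₁ ∈ veroBlocks k ℒ) (hM₂ : M₂ ∈ veroBlocks k ℒ)
    (hd₁ : L₁ ≠ L₂) (hd₂ : L₁ ≠ M₁) (hd₃ : L₁ ≠ M₂) (hd₄ : L₂ ≠ M₁) (hd₅ : L₂ ≠ M₂)
    (hd₆ : M₁ ≠ M₂)
    (hp₁ : p ∈ L₁) (hp₂ : p ∈ L₂) (hp₃ : p ∉ M₁) (hp₄ : p ∉ M₂)
    (hi₁ : (L₁ ∩ M₁).Nonempty) (hi₂ : (L₁ ∩ M₂).Nonempty)
    (hi₃ : (L₂ ∩ M₁).Nonempty) (hi₄ : (L₂ ∩ M₂).Nonempty)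
    (hadj : (∃ a ∈ L₁ ∩ M₁, ∃ b ∈ L₂ ∩ M₂, VerAdj k ℒ a b) ∨
            (∃ a ∈ L₁ ∩ M₂, ∃ b ∈ L₂ ∩ M₁, VerAdj k ℒ a b)) :
    (∃ T ∈ veroLeaves S k, L₁ ⊆ T ∧ L₂ ⊆ T ∧ M₁ ⊆ T ∧ M₂ ⊆ T) ∧
      (Veblenian ℒ → (M₁ ∩ M₂).Nonempty) :=
  stmt_4_general ℒ k p L₁ L₂ M₁ M₂ hL₁ hL₂ hM₁ hM₂
    (hL.veroBlocks_inter_subsingleton hL₁ hL₂ hd₁) (hL.veroBlocks_inter_subsingleton hM₁ hM₂ hd₆)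
    hp₁ hp₂ hp₃ hp₄ hi₁ hi₂ hi₃ hi₄ hadj
end

section
/- Let (S, ℒ) be a linear space (a partial linear space in which any two distinct points lie on a common line), and let L₁, K₁, L₂, K₂ be blocks of V_2(S, ℒ) lying in four pairwise distinct leaves which form a quadrangle without diagonals: there are four pairwise distinct points p₁ ∈ L₁ ∩ K₁, p₂ ∈ K₁ ∩ L₂, p₃ ∈ L₂ ∩ K₂, p₄ ∈ K₂ ∩ L₁ such that p₁ is not adjacent to p₃ and p₂ is not adjacent to p₄. Then, after possibly exchanging the pair (L₁, L₂) with the pair (K₁, K₂) and/or the two blocks within each of these pairs, one of the following holds: (1) there are lines m, n ∈ ℒ and points a₁ ≠ b₁ on n and a₂ ≠ b₂ on m with L₁ = a₁ + m, L₂ = b₁ + m, K₁ = a₂ + n, K₂ = b₂ + n, and the vertices of the quadrangle are a₁+a₂, a₁+b₂, a₂+b₁, b₁+b₂; (2) there are lines m, n, l ∈ ℒ and pairwise distinct points a, b, c with a, b ∈ n, a, c ∈ m, b, c ∈ l, such that K₁ = 2n, K₂ = c + n, L₁ = a + m, L₂ = b + l, and the vertices are 2a, a+c, 2b, b+c. 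-/
def QuadCase {S : Type*} (ℒ : Set (Set S)) (A₁ A₂ C₁ C₂ : Set (Multiset S))
    (Vtx : Set (Multiset S)) : Prop :=
  (∃ m ∈ ℒ, ∃ n ∈ ℒ, ∃ a₁ b₁ a₂ b₂ : S,
      a₁ ∈ n ∧ b₁ ∈ n ∧ a₁ ≠ b₁ ∧ a₂ ∈ m ∧ b₂ ∈ m ∧ a₂ ≠ b₂ ∧
      A₁ = addPt a₁ m ∧ A₂ = addPt b₁ m ∧ C₁ = addPt a₂ n ∧ C₂ = addPt b₂ n ∧
      Vtx = {({a₁, a₂} : Multiset S), ({a₁, b₂} : Multiset S),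
             ({a₂, b₁} : Multiset S), ({b₁, b₂} : Multiset S)}) ∨
  (∃ m ∈ ℒ, ∃ n ∈ ℒ, ∃ l ∈ ℒ, ∃ a b c : S,
      a ≠ b ∧ a ≠ c ∧ b ≠ c ∧ a ∈ n ∧ b ∈ n ∧ a ∈ m ∧ c ∈ m ∧ b ∈ l ∧ c ∈ l ∧
      C₁ = dbl n ∧ C₂ = addPt c n ∧ A₁ = addPt a m ∧ A₂ = addPt b l ∧
      Vtx = {({a, a} : Multiset S), ({a, c} : Multiset S),
             ({b, b} : Multiset S), ({b, c} : Multiset S)})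

/-!
Two distinct leaves of `V₂(S, ℒ)` meet in at most one point: `a + S` and `b + S` share only `a + b`,
while `2S` and `a + S` share only `2a`. Hence the leaves of the four blocks determine the vertices
of the quadrangle, and membership of the vertices in the blocks says which points of `S` lie on
which of the underlying lines. The underlying lines of two opposite blocks have two points in
common, and so are equal, unless `2S` is the leaf of one of the other two blocks. A rotation of
the quadrangle moves the leaf `2S`, if it occurs, to the first block.
-/

theorem pair_eq_pair_iff {α : Type*} {a b c d : α} :
    ({a, b} : Multiset α) = {c, d} ↔ a = c ∧ b = d ∨ a = d ∧ b = c := by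
  have h : ({a, b} : Multiset α) = {c, d} ↔ [a, b].Perm [c, d] := Multiset.coe_eq_coe
  rw [h]
  simp [List.perm_pair]

theorem range_fin_four {α : Type*} (f : Fin 4 → α) : Set.range f = {f 0, f 1, f 2, f 3} := by
  ext
  simp [Fin.exists_fin_succ, eq_comm]

section LinesInLeaves

variable {S : Type*} {ℒ : Set (Set S)} {a b : S} {m n : Set S} {o o' : Option S}
  {p : Multiset S} {B T : Set (Multiset S)}

theorem mem_addPt_inter_addPt_iff (hab : a ≠ b) :
    p ∈ addPt a m ∩ addPt b n ↔ b ∈ m ∧ a ∈ n ∧ p = {a, b} := by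
  constructor
  · rintro ⟨⟨x, hx, rfl⟩, y, hy, hxy⟩
    obtain ⟨rfl, rfl⟩ := (pair_eq_pair_iff.1 hxy).resolve_left (fun h ↦ hab h.1)
    exact ⟨hx, hy, rfl⟩
  · rintro ⟨hb, ha, rfl⟩
    exact ⟨⟨b, hb, rfl⟩, a, ha, Multiset.pair_comm a b⟩

theorem mem_dbl_inter_addPt_iff :
    p ∈ dbl m ∩ addPt a n ↔ a ∈ m ∧ a ∈ n ∧ p = {a, a} := by
  constructor
  · rintro ⟨⟨x, hx, rfl⟩, y, hy, hxy⟩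
    obtain ⟨rfl, rfl⟩ | ⟨rfl, rfl⟩ := pair_eq_pair_iff.1 hxy <;> exact ⟨hx, hy, rfl⟩
  · rintro ⟨hm, hn, rfl⟩
    exact ⟨⟨a, hm, rfl⟩, a, hn, rfl⟩

/-- The copy of `m ⊆ S` in a leaf of `V₂(S, ℒ)`. Leaves are indexed by `Option S`: the index
`some a` stands for the leaf `a + S`, and `none` stands for `2S`. -/
def leafCopy : Option S → Set S → Set (Multiset S)
  | none, m => dbl m
  | some a, m => addPt a m

theorem leafCopy_nontrivial (hm : m.Nontrivial) (o : Option S) : (leafCopy o m).Nontrivial := by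
  obtain ⟨x, hx, y, hy, hxy⟩ := hm
  cases o with
  | none =>
    refine ⟨{x, x}, ⟨x, hx, rfl⟩, {y, y}, ⟨y, hy, rfl⟩, fun h ↦ hxy ?_⟩
    exact (pair_eq_pair_iff.1 h).elim And.left And.left
  | some a =>
    refine ⟨{a, x}, ⟨x, hx, rfl⟩, {a, y}, ⟨y, hy, rfl⟩, fun h ↦ hxy ?_⟩
    exact Multiset.singleton_inj.1 ((Multiset.cons_inj_right a).1 h)

theorem leafCopy_inter_subsingleton (h : o ≠ o') (m n : Set S) :
    (leafCopy o m ∩ leafCopy o' n).Subsingleton := by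
  intro p hp q hq
  rcases o with _ | a <;> rcases o' with _ | b
  · exact absurd rfl h
  · rw [(mem_dbl_inter_addPt_iff.1 hp).2.2, (mem_dbl_inter_addPt_iff.1 hq).2.2]
  · rw [(mem_dbl_inter_addPt_iff.1 hp.symm).2.2, (mem_dbl_inter_addPt_iff.1 hq.symm).2.2]
  · have hab : a ≠ b := fun hab ↦ h (congrArg some hab)
    rw [((mem_addPt_inter_addPt_iff hab).1 hp).2.2, ((mem_addPt_inter_addPt_iff hab).1 hq).2.2]

theorem eq_of_leafCopy_subset_leafCopy (hm : m.Nontrivial)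
    (h : leafCopy o m ⊆ leafCopy o' n) : o = o' := by
  by_contra ho
  have hsub := leafCopy_inter_subsingleton ho m n
  rw [Set.inter_eq_left.2 h] at hsub
  exact (leafCopy_nontrivial hm o).not_subsingleton hsub

theorem mem_veroBlocks_two_iff : B ∈ veroBlocks 2 ℒ ↔ ∃ o, ∃ m ∈ ℒ, B = leafCopy o m := by
  constructor
  · rintro ⟨r, e, m, hr, hr2, he, hm, rfl⟩
    obtain rfl | rfl : r = 1 ∨ r = 2 := by lia
    · obtain ⟨a, rfl⟩ := Multiset.card_eq_one.1 he
      exact ⟨some a, m, hm, rfl⟩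
    · obtain rfl := Multiset.card_eq_zero.1 he
      exact ⟨none, m, hm, by simp only [veroBlock, zero_add]; rfl⟩
  · rintro ⟨_ | a, m, hm, rfl⟩
    · exact ⟨2, 0, m, by simp, le_rfl, rfl, hm, by simp only [veroBlock, zero_add]; rfl⟩
    · exact ⟨1, {a}, m, one_pos, one_le_two, rfl, hm, rfl⟩

theorem veroLeaves_eq_veroBlocks_singleton_univ (S : Type*) (k : ℕ) :
    veroLeaves S k = veroBlocks k {Set.univ} := by
  ext T
  simp [veroLeaves, veroBlocks]

theorem mem_veroLeaves_two_iff : T ∈ veroLeaves S 2 ↔ ∃ o, T = leafCopy o Set.univ := by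
  simp [veroLeaves_eq_veroBlocks_singleton_univ, mem_veroBlocks_two_iff]

theorem IsPLS.nontrivial_of_mem (hℒ : IsPLS ℒ) (hm : m ∈ ℒ) : m.Nontrivial := by
  obtain ⟨x, y, -, hx, hy, -, hxy, -⟩ := hℒ.2.1 m hm
  exact ⟨x, hx, y, hy, hxy⟩

theorem IsPLS.exists_eq_leafCopy (hℒ : IsPLS ℒ) (hB : B ∈ veroBlocks 2 ℒ)
    (hT : T ∈ veroLeaves S 2) (hBT : B ⊆ T) :
    ∃ o, T = leafCopy o Set.univ ∧ ∃ m ∈ ℒ, B = leafCopy o m := by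
  obtain ⟨o, m, hm, rfl⟩ := mem_veroBlocks_two_iff.1 hB
  obtain ⟨o', rfl⟩ := mem_veroLeaves_two_iff.1 hT
  obtain rfl := eq_of_leafCopy_subset_leafCopy (hℒ.nontrivial_of_mem hm) hBT
  exact ⟨o, rfl, m, hm, rfl⟩

end LinesInLeaves

section Quadrangles

variable {S : Type*} {ℒ : Set (Set S)} {V : Set (Multiset S)}

/-- The configuration `QuadCase` for the blocks `L₁, K₁, L₂, K₂ = B 0, B 1, B 2, B 3`, after
possibly exchanging the pair `(L₁, L₂)` with `(K₁, K₂)` and/or the two blocks within each pair. -/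
def QuadCaseUpToExchange (ℒ : Set (Set S)) (B : Fin 4 → Set (Multiset S))
    (V : Set (Multiset S)) : Prop :=
  QuadCase ℒ (B 0) (B 2) (B 1) (B 3) V ∨ QuadCase ℒ (B 0) (B 2) (B 3) (B 1) V ∨
  QuadCase ℒ (B 2) (B 0) (B 1) (B 3) V ∨ QuadCase ℒ (B 2) (B 0) (B 3) (B 1) V ∨
  QuadCase ℒ (B 1) (B 3) (B 0) (B 2) V ∨ QuadCase ℒ (B 1) (B 3) (B 2) (B 0) V ∨
  QuadCase ℒ (B 3) (B 1) (B 0) (B 2) V ∨ QuadCase ℒ (B 3) (B 1) (B 2) (B 0) V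

theorem quadCaseUpToExchange_rotate_iff (B : Fin 4 → Set (Multiset S)) (j : Fin 4) :
    QuadCaseUpToExchange ℒ (fun i ↦ B (i + j)) V ↔ QuadCaseUpToExchange ℒ B V := by
  fin_cases j <;> simp only [QuadCaseUpToExchange, Fin.reduceFinMk, Fin.reduceAdd] <;> tauto

/-- A quadrangle in `V₂(S, ℒ)` with sides in pairwise distinct leaves. Side `i` is the copy of
`line i` in the leaf indexed by `leaf i` (see `leafCopy`), and `vertex i` is common to the sides
`i` and `i + 1`, where indices are read modulo 4. -/
structure IsLeafQuadrangle (ℒ : Set (Set S)) (leaf : Fin 4 → Option S) (line : Fin 4 → Set S)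
    (vertex : Fin 4 → Multiset S) : Prop where
  leaf_injective : Function.Injective leaf
  line_mem : ∀ i, line i ∈ ℒ
  vertex_mem : ∀ i, vertex i ∈ leafCopy (leaf i) (line i) ∩ leafCopy (leaf (i + 1)) (line (i + 1))

namespace IsLeafQuadrangle

variable {leaf : Fin 4 → Option S} {line : Fin 4 → Set S} {vertex : Fin 4 → Multiset S}

theorem rotate (h : IsLeafQuadrangle ℒ leaf line vertex) (j : Fin 4) :
    IsLeafQuadrangle ℒ (fun i ↦ leaf (i + j)) (fun i ↦ line (i + j))
      (fun i ↦ vertex (i + j)) where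
  leaf_injective := h.leaf_injective.comp (add_left_injective j)
  line_mem i := h.line_mem (i + j)
  vertex_mem i := by simpa only [add_right_comm] using h.vertex_mem (i + j)

theorem ne_of_leaf_eq_some (h : IsLeafQuadrangle ℒ leaf line vertex) {i j : Fin 4} {a b : S}
    (hij : i ≠ j) (ha : leaf i = some a) (hb : leaf j = some b) : a ≠ b := by
  rintro rfl
  exact hij (h.leaf_injective (ha.trans hb.symm))

theorem meet_some_some (h : IsLeafQuadrangle ℒ leaf line vertex) {i : Fin 4} {a b : S}
    (ha : leaf i = some a) (hb : leaf (i + 1) = some b) :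
    b ∈ line i ∧ a ∈ line (i + 1) ∧ vertex i = {a, b} := by
  have hab : a ≠ b := h.ne_of_leaf_eq_some (by simp) ha hb
  simpa only [ha, hb, leafCopy, mem_addPt_inter_addPt_iff hab] using h.vertex_mem i

theorem meet_none_some (h : IsLeafQuadrangle ℒ leaf line vertex) {i : Fin 4} {a : S}
    (hi : leaf i = none) (ha : leaf (i + 1) = some a) :
    a ∈ line i ∧ a ∈ line (i + 1) ∧ vertex i = {a, a} := by
  simpa only [hi, ha, leafCopy, mem_dbl_inter_addPt_iff] using h.vertex_mem i

theorem meet_some_none (h : IsLeafQuadrangle ℒ leaf line vertex) {i : Fin 4} {a : S}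
    (ha : leaf i = some a) (hi : leaf (i + 1) = none) :
    a ∈ line (i + 1) ∧ a ∈ line i ∧ vertex i = {a, a} := by
  simpa only [hi, ha, leafCopy, Set.inter_comm (addPt _ _), mem_dbl_inter_addPt_iff]
    using h.vertex_mem i

theorem quadCase_of_leaf_eq_some (hℒ : IsPLS ℒ) (h : IsLeafQuadrangle ℒ leaf line vertex)
    {a : Fin 4 → S} (ha : ∀ i, leaf i = some (a i)) :
    QuadCase ℒ (leafCopy (leaf 0) (line 0)) (leafCopy (leaf 2) (line 2))
      (leafCopy (leaf 1) (line 1)) (leafCopy (leaf 3) (line 3)) (Set.range vertex) := by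
  obtain rfl : leaf = fun i ↦ some (a i) := funext ha
  have ha_inj : Function.Injective a := fun i j hij ↦ h.leaf_injective (congrArg some hij)
  have meet (i : Fin 4) : a (i + 1) ∈ line i ∧ a i ∈ line (i + 1) ∧ vertex i = {a i, a (i + 1)} :=
    h.meet_some_some rfl rfl
  have line_opposite (i : Fin 4) : line i = line (i + 2) := by
    have ha₁ : a (i + 1) ∈ line (i + 2) := by simpa [add_assoc] using (meet (i + 1)).2.1
    have ha₃ : a (i + 3) ∈ line i := by simpa [add_assoc] using (meet (i + 3)).2.1
    have ha₃' : a (i + 3) ∈ line (i + 2) := by simpa [add_assoc] using (meet (i + 2)).1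
    exact hℒ.2.2 _ _ (ha_inj.ne (by simp)) _ (h.line_mem i) _ (h.line_mem (i + 2))
      (meet i).1 ha₃ ha₁ ha₃'
  refine .inl ⟨line 0, h.line_mem 0, line 1, h.line_mem 1, a 0, a 2, a 1, a 3, (meet 0).2.1,
    (meet 1).1, ha_inj.ne (by decide), (meet 0).1, ?_, ha_inj.ne (by decide), rfl, ?_, rfl, ?_, ?_⟩
  · exact line_opposite 0 ▸ (meet 2).1
  · exact congrArg (addPt (a 2)) (line_opposite 0).symm
  · exact congrArg (addPt (a 3)) (line_opposite 1).symm
  · rw [range_fin_four, (meet 0).2.2, (meet 1).2.2, (meet 2).2.2, (meet 3).2.2,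
      Multiset.pair_comm (a 3)]
    grind

theorem quadCase_of_leaf_zero_eq_none (hℒ : IsPLS ℒ) (h : IsLeafQuadrangle ℒ leaf line vertex)
    (h₀ : leaf 0 = none) :
    QuadCase ℒ (leafCopy (leaf 1) (line 1)) (leafCopy (leaf 3) (line 3))
      (leafCopy (leaf 0) (line 0)) (leafCopy (leaf 2) (line 2)) (Set.range vertex) := by
  have leaf_some (i : Fin 4) (hi : i ≠ 0) : ∃ x, leaf i = some x :=
    Option.ne_none_iff_exists'.1 (h₀ ▸ h.leaf_injective.ne hi)
  obtain ⟨a, ha⟩ := leaf_some 1 (by decide)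
  obtain ⟨c, hc⟩ := leaf_some 2 (by decide)
  obtain ⟨b, hb⟩ := leaf_some 3 (by decide)
  have hab : a ≠ b := h.ne_of_leaf_eq_some (by decide) ha hb
  have hac : a ≠ c := h.ne_of_leaf_eq_some (by decide) ha hc
  have hbc : b ≠ c := h.ne_of_leaf_eq_some (by decide) hb hc
  obtain ⟨ha₀, ha₁, hv₀⟩ : a ∈ line 0 ∧ a ∈ line 1 ∧ vertex 0 = {a, a} := h.meet_none_some h₀ ha
  obtain ⟨hc₁, ha₂, hv₁⟩ : c ∈ line 1 ∧ a ∈ line 2 ∧ vertex 1 = {a, c} := h.meet_some_some ha hc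
  obtain ⟨hb₂, hc₃, hv₂⟩ : b ∈ line 2 ∧ c ∈ line 3 ∧ vertex 2 = {c, b} := h.meet_some_some hc hb
  obtain ⟨hb₀, hb₃, hv₃⟩ : b ∈ line 0 ∧ b ∈ line 3 ∧ vertex 3 = {b, b} := h.meet_some_none hb h₀
  have line_two : line 2 = line 0 :=
    hℒ.2.2 a b hab _ (h.line_mem 2) _ (h.line_mem 0) ha₂ hb₂ ha₀ hb₀
  rw [h₀, ha, hb, hc, line_two]
  refine .inr ⟨line 1, h.line_mem 1, line 0, h.line_mem 0, line 3, h.line_mem 3, a, b, c,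
    hab, hac, hbc, ha₀, hb₀, ha₁, hc₁, hb₃, hc₃, rfl, rfl, rfl, rfl, ?_⟩
  rw [range_fin_four, hv₀, hv₁, hv₂, hv₃, Multiset.pair_comm c b]
  grind

theorem quadCaseUpToExchange (hℒ : IsPLS ℒ) (h : IsLeafQuadrangle ℒ leaf line vertex) :
    QuadCaseUpToExchange ℒ (fun i ↦ leafCopy (leaf i) (line i)) (Set.range vertex) := by
  by_cases hnone : ∃ j, leaf j = none
  · obtain ⟨j, hj⟩ := hnone
    have key := (h.rotate j).quadCase_of_leaf_zero_eq_none hℒ (by simpa using hj)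
    rw [← quadCaseUpToExchange_rotate_iff _ j, ← (Equiv.addRight j).surjective.range_comp vertex]
    exact .inr <| .inr <| .inr <| .inr <| .inl key
  · push Not at hnone
    choose a ha using fun i ↦ Option.ne_none_iff_exists'.1 (hnone i)
    exact .inl (h.quadCase_of_leaf_eq_some hℒ ha)

end IsLeafQuadrangle

theorem quadCaseUpToExchange_of_veroBlocks (hℒ : IsPLS ℒ) {B T : Fin 4 → Set (Multiset S)}
    {p : Fin 4 → Multiset S} (hB : ∀ i, B i ∈ veroBlocks 2 ℒ) (hT : ∀ i, T i ∈ veroLeaves S 2)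
    (hBT : ∀ i, B i ⊆ T i) (hT_inj : Function.Injective T)
    (hp : ∀ i, p i ∈ B i ∩ B (i + 1)) : QuadCaseUpToExchange ℒ B (Set.range p) := by
  choose leaf hleaf line hline hB_eq using
    fun i ↦ hℒ.exists_eq_leafCopy (hB i) (hT i) (hBT i)
  obtain rfl : B = fun i ↦ leafCopy (leaf i) (line i) := funext hB_eq
  obtain rfl : T = fun i ↦ leafCopy (leaf i) Set.univ := funext hleaf
  have h : IsLeafQuadrangle ℒ leaf line p :=
    ⟨fun i j hij ↦ hT_inj (congrArg (leafCopy · Set.univ) hij), hline, hp⟩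
  exact h.quadCaseUpToExchange hℒ

end Quadrangles

theorem stmt_5_general {S : Type*} {ℒ : Set (Set S)} (hℒ : IsPLS ℒ)
    {L₁ K₁ L₂ K₂ : Set (Multiset S)}
    (hL₁ : L₁ ∈ veroBlocks 2 ℒ) (hK₁ : K₁ ∈ veroBlocks 2 ℒ)
    (hL₂ : L₂ ∈ veroBlocks 2 ℒ) (hK₂ : K₂ ∈ veroBlocks 2 ℒ)
    {T₁ T₂ T₃ T₄ : Set (Multiset S)}
    (hT₁ : T₁ ∈ veroLeaves S 2) (hT₂ : T₂ ∈ veroLeaves S 2)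
    (hT₃ : T₃ ∈ veroLeaves S 2) (hT₄ : T₄ ∈ veroLeaves S 2)
    (hsub₁ : L₁ ⊆ T₁) (hsub₂ : K₁ ⊆ T₂) (hsub₃ : L₂ ⊆ T₃) (hsub₄ : K₂ ⊆ T₄)
    (hTd : T₁ ≠ T₂ ∧ T₁ ≠ T₃ ∧ T₁ ≠ T₄ ∧ T₂ ≠ T₃ ∧ T₂ ≠ T₄ ∧ T₃ ≠ T₄)
    {p₁ p₂ p₃ p₄ : Multiset S} (hp₁ : p₁ ∈ L₁ ∩ K₁) (hp₂ : p₂ ∈ K₁ ∩ L₂)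
    (hp₃ : p₃ ∈ L₂ ∩ K₂) (hp₄ : p₄ ∈ K₂ ∩ L₁) :
    QuadCaseUpToExchange ℒ ![L₁, K₁, L₂, K₂] {p₁, p₂, p₃, p₄} := by
  have hT_inj : Function.Injective ![T₁, T₂, T₃, T₄] := by
    apply List.nodup_ofFn.1
    simpa [and_assoc] using hTd
  have hvertices : Set.range ![p₁, p₂, p₃, p₄] = {p₁, p₂, p₃, p₄} := range_fin_four _
  rw [← hvertices]
  refine quadCaseUpToExchange_of_veroBlocks hℒ (T := ![T₁, T₂, T₃, T₄]) ?_ ?_ ?_ hT_inj ?_ <;>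
    intro i <;> fin_cases i <;> assumption

theorem stmt_5 {S : Type*} (ℒ : Set (Set S)) (hL : IsLinearSpace ℒ)
    (L₁ K₁ L₂ K₂ : Set (Multiset S))
    (hL₁ : L₁ ∈ veroBlocks 2 ℒ) (hK₁ : K₁ ∈ veroBlocks 2 ℒ)
    (hL₂ : L₂ ∈ veroBlocks 2 ℒ) (hK₂ : K₂ ∈ veroBlocks 2 ℒ)
    (T₁ T₂ T₃ T₄ : Set (Multiset S))
    (hT₁ : T₁ ∈ veroLeaves S 2) (hT₂ : T₂ ∈ veroLeaves S 2)
    (hT₃ : T₃ ∈ veroLeaves S 2) (hT₄ : T₄ ∈ veroLeaves S 2)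
    (hsub₁ : L₁ ⊆ T₁) (hsub₂ : K₁ ⊆ T₂) (hsub₃ : L₂ ⊆ T₃) (hsub₄ : K₂ ⊆ T₄)
    (hTd : T₁ ≠ T₂ ∧ T₁ ≠ T₃ ∧ T₁ ≠ T₄ ∧ T₂ ≠ T₃ ∧ T₂ ≠ T₄ ∧ T₃ ≠ T₄)
    (p₁ p₂ p₃ p₄ : Multiset S)
    (hpd : p₁ ≠ p₂ ∧ p₁ ≠ p₃ ∧ p₁ ≠ p₄ ∧ p₂ ≠ p₃ ∧ p₂ ≠ p₄ ∧ p₃ ≠ p₄)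
    (hp₁ : p₁ ∈ L₁ ∩ K₁) (hp₂ : p₂ ∈ K₁ ∩ L₂) (hp₃ : p₃ ∈ L₂ ∩ K₂) (hp₄ : p₄ ∈ K₂ ∩ L₁)
    (hna₁ : ¬ VerAdj 2 ℒ p₁ p₃) (hna₂ : ¬ VerAdj 2 ℒ p₂ p₄) :
    QuadCase ℒ L₁ L₂ K₁ K₂ {p₁, p₂, p₃, p₄} ∨ QuadCase ℒ L₁ L₂ K₂ K₁ {p₁, p₂, p₃, p₄} ∨
    QuadCase ℒ L₂ L₁ K₁ K₂ {p₁, p₂, p₃, p₄} ∨ QuadCase ℒ L₂ L₁ K₂ K₁ {p₁, p₂, p₃, p₄} ∨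
    QuadCase ℒ K₁ K₂ L₁ L₂ {p₁, p₂, p₃, p₄} ∨ QuadCase ℒ K₁ K₂ L₂ L₁ {p₁, p₂, p₃, p₄} ∨
    QuadCase ℒ K₂ K₁ L₁ L₂ {p₁, p₂, p₃, p₄} ∨ QuadCase ℒ K₂ K₁ L₂ L₁ {p₁, p₂, p₃, p₄} :=
  stmt_5_general hL.1 hL₁ hK₁ hL₂ hK₂ hT₁ hT₂ hT₃ hT₄ hsub₁ hsub₂ hsub₃ hsub₄ hTd
    hp₁ hp₂ hp₃ hp₄
end

section
/- Let K be a field with char K ≠ 2, V a K-vector space, and ξ a nonzero alternating bilinear form on V (ξ(u,u) = 0 for all u). Then the set H_ξ = { ⟨u⟩ + ⟨v⟩ : u, v ∈ V∖{0}, ξ(u,v) = 0 } is a proper subspace of the Veronese space V₂(ℙ(V)) which meets every block; that is, H_ξ is a hyperplane of V₂(ℙ(V)). -/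
def projLines (K V : Type*) [Field K] [AddCommGroup V] [Module K V] :
    Set (Set (Projectivization K V)) :=
  { L | ∃ W : Submodule K V, Module.finrank K ↥W = 2 ∧
      L = { p : Projectivization K V | p.submodule ≤ W } }

def Hxi {K V : Type*} [Field K] [AddCommGroup V] [Module K V]
    (ξ : V →ₗ[K] V →ₗ[K] K) : Set (Multiset (Projectivization K V)) :=
  { m | ∃ (u v : V) (hu : u ≠ 0) (hv : v ≠ 0), ξ u v = 0 ∧
      m = ({Projectivization.mk K u hu, Projectivization.mk K v hv} :
        Multiset (Projectivization K V)) }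

/-!
A proper subset `X` of `𝔶_2(S)` containing every double point `2x` contains the blocks `2B`, so it
is a hyperplane as soon as, for every point `a`, its trace `{x | a + x ∈ X}` on the leaf `a + S` is
a subspace of the base geometry meeting every line. For `X = H_ξ` the diagonal lies in `X` because
`ξ` is alternating, and the trace at `⟨u⟩` is the projective space of `ker ξ(u, ·)`. The kernel of
a linear functional contains every 2-dimensional space spanned by two of its vectors, and it meets
every 2-dimensional space nontrivially.
-/

section Veronese

variable {S : Type*} {L : Set (Set S)} {X : Set (Multiset S)}

theorem multiset_pair_eq_pair_iff {a b c d : S} :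
    ({a, b} : Multiset S) = {c, d} ↔ a = c ∧ b = d ∨ a = d ∧ b = c := by
  change (([a, b] : List S) : Multiset S) = ([c, d] : List S) ↔ _
  rw [Multiset.coe_eq_coe, List.perm_pair]
  simp

/-- The trace on `S` of a set `X` of multisets along the leaf `a + S`. When `X` is `Hxi ξ` this is
the polar of the point `a` with respect to `ξ`. -/
def polar (X : Set (Multiset S)) (a : S) : Set S :=
  {x | {a, x} ∈ X}

theorem veroBlock_singleton_one (a : S) (B : Set S) : veroBlock {a} 1 B = addPt a B :=
  rfl

theorem veroBlock_zero_two (B : Set S) : veroBlock 0 2 B = dbl B := by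
  simp only [veroBlock, dbl, zero_add]
  rfl

theorem forall_mem_veroBlocks_two {P : Set (Multiset S) → Prop}
    (hadd : ∀ a, ∀ B ∈ L, P (addPt a B)) (hdbl : ∀ B ∈ L, P (dbl B)) :
    ∀ T ∈ veroBlocks 2 L, P T := by
  rintro _ ⟨r, e, B, hr, hr2, he, hB, rfl⟩
  obtain rfl | rfl : r = 1 ∨ r = 2 := by lia
  · obtain ⟨a, rfl⟩ := Multiset.card_eq_one.1 he
    exact veroBlock_singleton_one a B ▸ hadd a B hB
  · obtain rfl := Multiset.card_eq_zero.1 he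
    exact veroBlock_zero_two B ▸ hdbl B hB

theorem dbl_subset (hdiag : ∀ x, {x, x} ∈ X) (B : Set S) : dbl B ⊆ X := by
  rintro _ ⟨x, -, rfl⟩
  exact hdiag x

theorem isSubspace_veroBlocks_two (hdiag : ∀ x, {x, x} ∈ X)
    (hpolar : ∀ a, IsSubspace L (polar X a)) : IsSubspace (veroBlocks 2 L) X := by
  refine forall_mem_veroBlocks_two ?_ fun B _ _ ↦ dbl_subset hdiag B
  rintro a B hB ⟨_, ⟨⟨x, hx, rfl⟩, hxX⟩, _, ⟨⟨y, hy, rfl⟩, hyX⟩, hne⟩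
  have hxy : x ≠ y := by
    rintro rfl
    exact hne rfl
  rintro _ ⟨z, hz, rfl⟩
  exact hpolar a B hB ⟨x, ⟨hx, hxX⟩, y, ⟨hy, hyX⟩, hxy⟩ hz

theorem inter_nonempty_of_mem_veroBlocks_two [Nonempty S] (hdiag : ∀ x, {x, x} ∈ X)
    (hpolar : ∀ a, ∀ B ∈ L, (B ∩ polar X a).Nonempty) :
    ∀ T ∈ veroBlocks 2 L, (T ∩ X).Nonempty := by
  refine forall_mem_veroBlocks_two (fun a B hB ↦ ?_) fun B hB ↦ ?_
  · obtain ⟨x, hx, hxX⟩ := hpolar a B hB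
    exact ⟨{a, x}, ⟨x, hx, rfl⟩, hxX⟩
  · obtain ⟨x, hx, -⟩ := hpolar (Classical.arbitrary S) B hB
    exact ⟨{x, x}, ⟨x, hx, rfl⟩, hdiag x⟩

end Veronese

section Projective

open Module
open scoped LinearAlgebra.Projectivization

variable {K V : Type*} [Field K] [AddCommGroup V] [Module K V]

theorem mem_projLines_iff {B : Set (ℙ K V)} :
    B ∈ projLines K V ↔ ∃ W : Submodule K V, finrank K W = 2 ∧ B = W.projectivization := by
  simp only [projLines, ← Submodule.mem_projectivization_iff_submodule_le]
  rfl

theorem isSubspace_projLines_projectivization (U : Submodule K V) :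
    IsSubspace (projLines K V) (U.projectivization : Set (ℙ K V)) := by
  intro B hB
  obtain ⟨W, hW, rfl⟩ := mem_projLines_iff.1 hB
  rintro ⟨x, ⟨hxW, hxU⟩, y, ⟨hyW, hyU⟩, hxy⟩
  induction x using Projectivization.ind with | h v hv =>
  induction y using Projectivization.ind with | h w hw =>
  rw [← Projectivization.independent_pair_iff_ne,
    Projectivization.independent_mk_iff_LinearIndependent] at hxy
  have hspan : W = Submodule.span K {v, w} :=
    Projectivization.line_unique' hv hw hxy W hW hxW hyW
  have hWU : W ≤ U := hspan ▸ Submodule.span_le.2 (Set.pair_subset hxU hyU)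
  exact Submodule.projectivization.monotone hWU

theorem inter_projectivization_ker_nonempty (f : Dual K V) {B : Set (ℙ K V)}
    (hB : B ∈ projLines K V) : (B ∩ f.ker.projectivization).Nonempty := by
  obtain ⟨W, hW, rfl⟩ := mem_projLines_iff.1 hB
  have : FiniteDimensional K W := .of_finrank_pos (by lia)
  have hker : (f.domRestrict W).ker ≠ ⊥ :=
    LinearMap.ker_ne_bot_of_finrank_lt (by rw [hW, finrank_self]; exact one_lt_two)
  obtain ⟨w, hfw, hw⟩ := Submodule.exists_mem_ne_zero_of_ne_bot hker
  exact ⟨Projectivization.mk K w (Subtype.coe_ne_coe.2 hw), w.2, hfw⟩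

variable {ξ : V →ₗ[K] V →ₗ[K] K}

theorem pair_mk_mem_Hxi_iff (hξ : ξ.IsRefl) {u v : V} (hu : u ≠ 0) (hv : v ≠ 0) :
    {Projectivization.mk K u hu, Projectivization.mk K v hv} ∈ Hxi ξ ↔ ξ u v = 0 := by
  refine ⟨?_, fun huv ↦ ⟨u, v, hu, hv, huv, rfl⟩⟩
  rintro ⟨a, b, ha, hb, hab, hpair⟩
  simp only [multiset_pair_eq_pair_iff, Projectivization.mk_eq_mk_iff'] at hpair
  obtain ⟨⟨c, rfl⟩, ⟨d, rfl⟩⟩ | ⟨⟨c, rfl⟩, ⟨d, rfl⟩⟩ := hpair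
  · simp [hab]
  · simp [hξ a b hab]

theorem diag_mem_Hxi (hξ : ξ.IsAlt) (x : ℙ K V) : {x, x} ∈ Hxi ξ := by
  induction x using Projectivization.ind with | h u hu =>
  exact (pair_mk_mem_Hxi_iff hξ.isRefl hu hu).2 (hξ u)

theorem polar_Hxi (hξ : ξ.IsRefl) (a : ℙ K V) :
    polar (Hxi ξ) a = (ξ a.rep).ker.projectivization := by
  ext x
  induction x using Projectivization.ind with | h v hv =>
  have hmem := pair_mk_mem_Hxi_iff hξ a.rep_nonzero hv
  rwa [a.mk_rep] at hmem

theorem Hxi_subset_veroPoints (ξ : V →ₗ[K] V →ₗ[K] K) : Hxi ξ ⊆ veroPoints (ℙ K V) 2 := by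
  rintro _ ⟨u, v, hu, hv, -, rfl⟩
  exact Multiset.card_pair _ _

theorem Hxi_ne_veroPoints (hξ : ξ.IsRefl) (hξ0 : ξ ≠ 0) : Hxi ξ ≠ veroPoints (ℙ K V) 2 := by
  intro h
  refine hξ0 (LinearMap.ext₂ fun u v ↦ ?_)
  obtain rfl | hu := eq_or_ne u 0
  · simp
  obtain rfl | hv := eq_or_ne v 0
  · simp
  exact (pair_mk_mem_Hxi_iff hξ hu hv).1 (h ▸ Multiset.card_pair _ _)

theorem stmt_11_general (hξ : ξ.IsAlt) (hξ0 : ξ ≠ 0) :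
    IsVeroHyperplane 2 (projLines K V) (Hxi ξ) := by
  have hpolar := polar_Hxi hξ.isRefl
  have : Nontrivial V := by
    by_contra hV
    rw [not_nontrivial_iff_subsingleton] at hV
    exact hξ0 (Subsingleton.elim _ _)
  refine ⟨Hxi_subset_veroPoints ξ, Hxi_ne_veroPoints hξ.isRefl hξ0,
    isSubspace_veroBlocks_two (diag_mem_Hxi hξ) fun a ↦ ?_,
    inter_nonempty_of_mem_veroBlocks_two (diag_mem_Hxi hξ) fun a B hB ↦ ?_⟩
  · exact hpolar a ▸ isSubspace_projLines_projectivization _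
  · exact hpolar a ▸ inter_projectivization_ker_nonempty (ξ a.rep) hB

end Projective

theorem stmt_11 {K V : Type*} [Field K] [AddCommGroup V] [Module K V]
    (hchar : (2 : K) ≠ 0)
    (ξ : V →ₗ[K] V →ₗ[K] K) (hξ : ξ ≠ 0) (halt : ∀ u : V, ξ u u = 0) :
    IsVeroHyperplane 2 (projLines K V) (Hxi ξ) :=
  stmt_11_general halt hξ
end
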